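/- arXiv:2010.01881 — 5 statements merged into one kernel-verified Lean document; each statement's English description precedes it below -/
import Mathlib

section
/- Let c be a point of the Euclidean plane ℝ² and let S be a finite set of points such that every point of S is at distance exactly 2 from c, and any two distinct points of S are at distance at least 2 from each other. Then S has at most 6 elements. (Equivalently: a unit disk can touch at most 6 pairwise internally disjoint unit disks; the planar kissing number is 6.) -/
/-- Planar kissing number: if every point of a finite set `S` in the Euclidean plane
is at distance exactly 2 from `c`, and any two distinct points of `S` are at distance
at least 2 from each other, then `S` has at most 6 elements. -/
theorem kissing_number_plane (c : EuclideanSpace ℝ (Fin 2))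
    (S : Finset (EuclideanSpace ℝ (Fin 2)))
    (htouch : ∀ p ∈ S, dist c p = 2)
    (hsep : ∀ p ∈ S, ∀ q ∈ S, p ≠ q → 2 ≤ dist p q) :
    S.card ≤ 6 := by
  have hpi := Real.pi_pos
  have h3 : 0 < Real.pi / 3 := by positivity
  have hpol : ∀ p ∈ S, ∃ t : ℝ, -Real.pi < t ∧ t ≤ Real.pi ∧
      p 0 = c 0 + 2 * Real.cos t ∧ p 1 = c 1 + 2 * Real.sin t := by
    intro p hp
    have h := htouch p hp
    rw [EuclideanSpace.dist_eq, Fin.sum_univ_two, Real.dist_eq, Real.dist_eq, sq_abs, sq_abs] at h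
    have hn : ‖(⟨p 0 - c 0, p 1 - c 1⟩ : ℂ)‖ = 2 := by
      rw [Complex.norm_def, Complex.normSq_mk, ← h]
      congr 1
      ring
    refine ⟨Complex.arg ⟨p 0 - c 0, p 1 - c 1⟩, Complex.neg_pi_lt_arg _, Complex.arg_le_pi _, ?_, ?_⟩
    · have := Complex.norm_mul_cos_arg ⟨p 0 - c 0, p 1 - c 1⟩
      rw [hn] at this
      simp only at this
      linarith
    · have := Complex.norm_mul_sin_arg ⟨p 0 - c 0, p 1 - c 1⟩
      rw [hn] at this
      simp only at this
      linarith
  choose! t ht1 ht2 ht3 ht4 using hpol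
  by_contra hcard
  push Not at hcard
  obtain ⟨p, hp, q, hq, hne, hk⟩ := Finset.exists_ne_map_eq_of_card_lt_of_maps_to
    (s := S) (t := Finset.Icc (-2 : ℤ) 3) (f := fun p => ⌈t p / (Real.pi / 3)⌉)
    (by simpa using hcard) (by
      intro p hp
      have hp : p ∈ S := hp
      simp only [Finset.coe_Icc, Set.mem_Icc]
      constructor
      · have : (-3 : ℤ) < ⌈t p / (Real.pi / 3)⌉ := by
          rw [Int.lt_ceil, lt_div_iff₀ h3]
          push_cast
          linarith [ht1 p hp]
        omega
      · rw [Int.ceil_le, div_le_iff₀ h3]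
        push_cast
        linarith [ht2 p hp])
  have hd : |t p - t q| < Real.pi / 3 := by
    have a1 := Int.le_ceil (t p / (Real.pi / 3))
    have a2 := Int.ceil_lt_add_one (t p / (Real.pi / 3))
    have b1 := Int.le_ceil (t q / (Real.pi / 3))
    have b2 := Int.ceil_lt_add_one (t q / (Real.pi / 3))
    rw [hk] at a1 a2
    have : |t p / (Real.pi / 3) - t q / (Real.pi / 3)| < 1 := by
      rw [abs_lt]; constructor <;> linarith
    rwa [← sub_div, abs_div, abs_of_pos h3, div_lt_one h3] at this
  have hcos : 1 / 2 < Real.cos (t p - t q) := by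
    rw [← Real.cos_abs, ← Real.cos_pi_div_three]
    exact Real.cos_lt_cos_of_nonneg_of_le_pi (abs_nonneg _) (by linarith) hd
  have hs := hsep p hp q hq hne
  rw [EuclideanSpace.dist_eq, Fin.sum_univ_two, Real.dist_eq, Real.dist_eq, sq_abs, sq_abs,
    Real.le_sqrt' (by norm_num), ht3 p hp, ht3 q hq, ht4 p hp, ht4 q hq] at hs
  rw [Real.cos_sub] at hcos
  nlinarith [Real.sin_sq_add_cos_sq (t p), Real.sin_sq_add_cos_sq (t q)]
end

section
/- Let c be a point of the Euclidean plane ℝ² and let S be a set of exactly 6 points, each at distance exactly 2 from c, with any two distinct points of S at distance at least 2 from each other. Then for every p ∈ S, the set S equals { c + R_{kπ/3}(p − c) : k = 0, 1, …, 5 }, where R_θ denotes the rotation of ℝ² about the origin by angle θ. In particular, S is the vertex set of a regular hexagon of circumradius 2 centered at c, and the configuration is uniquely determined by c together with any single point of S. -/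
/-- Rotation of the Euclidean plane about the origin by angle `θ`. -/
noncomputable def planeRot (θ : ℝ) (x : EuclideanSpace ℝ (Fin 2)) :
    EuclideanSpace ℝ (Fin 2) :=
  (WithLp.equiv 2 (Fin 2 → ℝ)).symm
    ![Real.cos θ * x 0 - Real.sin θ * x 1, Real.sin θ * x 0 + Real.cos θ * x 1]

theorem hx_cos (d : ℝ) (h0 : 0 ≤ d) (h6 : d < 6) (h : Real.cos (d * Real.pi / 3) ≤ 1 / 2) :
    1 ≤ d ∧ d ≤ 5 := by
  have hp := Real.pi_pos
  constructor
  · by_contra! hd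
    have := Real.cos_lt_cos_of_nonneg_of_le_pi (x := d * Real.pi / 3) (y := Real.pi / 3)
      (by positivity) (by linarith) (by nlinarith)
    rw [Real.cos_pi_div_three] at this
    linarith
  · by_contra! hd
    have := Real.cos_lt_cos_of_nonneg_of_le_pi (x := 2 * Real.pi - d * Real.pi / 3)
      (y := Real.pi / 3) (by nlinarith) (by linarith) (by nlinarith)
    rw [Real.cos_pi_div_three, Real.cos_two_pi_sub] at this
    linarith

theorem hx_angle (x y : ℝ) (h : x ^ 2 + y ^ 2 = 1) :
    ∃ t : ℝ, 0 ≤ t ∧ t < 6 ∧ Real.cos (t * Real.pi / 3) = x ∧ Real.sin (t * Real.pi / 3) = y := by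
  have hp := Real.pi_pos
  have hn : ‖(⟨x, y⟩ : ℂ)‖ = 1 := by
    rw [Complex.norm_eq_sqrt_sq_add_sq]; simp [h]
  have hz : (⟨x, y⟩ : ℂ) ≠ 0 := by
    intro h0; rw [h0] at hn; simp at hn
  have hc := Complex.cos_arg hz
  have hs := Complex.sin_arg (⟨x, y⟩ : ℂ)
  rw [hn] at hc hs
  simp only [div_one] at hc hs
  have h1 := Complex.neg_pi_lt_arg (⟨x, y⟩ : ℂ)
  have h2 := Complex.arg_le_pi (⟨x, y⟩ : ℂ)
  set a := Complex.arg (⟨x, y⟩ : ℂ)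
  rcases le_or_gt 0 a with ha | ha
  · refine ⟨a * 3 / Real.pi, by positivity, ?_, ?_, ?_⟩
    · rw [div_lt_iff₀ hp]; linarith
    · rw [← hc]; congr 1; field_simp
    · rw [← hs]; congr 1; field_simp
  · refine ⟨(a + 2 * Real.pi) * 3 / Real.pi, ?_, ?_, ?_, ?_⟩
    · apply div_nonneg <;> linarith
    · rw [div_lt_iff₀ hp]; linarith
    · rw [← hc, ← Real.cos_add_two_pi a]; congr 1; field_simp
    · rw [← hs, ← Real.sin_add_two_pi a]; congr 1; field_simp

theorem hx_dist_sq (p q : EuclideanSpace ℝ (Fin 2)) :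
    dist p q ^ 2 = (p 0 - q 0) ^ 2 + (p 1 - q 1) ^ 2 := by
  rw [EuclideanSpace.dist_eq, Real.sq_sqrt (by positivity)]
  simp [Fin.sum_univ_two, Real.dist_eq, sq_abs]

theorem hx_exists (c p q : EuclideanSpace ℝ (Fin 2)) (hp : dist c p = 2) (hq : dist c q = 2) :
    ∃ t : ℝ, 0 ≤ t ∧ t < 6 ∧ q = c + planeRot (t * Real.pi / 3) (p - c) := by
  have h1 := hx_dist_sq c p
  have h2 := hx_dist_sq c q
  rw [hp] at h1
  rw [hq] at h2
  obtain ⟨t, t0, t6, hc, hs⟩ := hx_angle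
    (((p 0 - c 0) * (q 0 - c 0) + (p 1 - c 1) * (q 1 - c 1)) / 4)
    (((p 0 - c 0) * (q 1 - c 1) - (p 1 - c 1) * (q 0 - c 0)) / 4) (by
      have : ((p 0 - c 0) ^ 2 + (p 1 - c 1) ^ 2) * ((q 0 - c 0) ^ 2 + (q 1 - c 1) ^ 2) = 16 := by
        rw [show (p 0 - c 0) ^ 2 + (p 1 - c 1) ^ 2 = 4 by linarith,
          show (q 0 - c 0) ^ 2 + (q 1 - c 1) ^ 2 = 4 by linarith]
        norm_num
      linear_combination this / 16)
  refine ⟨t, t0, t6, ?_⟩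
  ext i
  fin_cases i
  · simp [planeRot, hc, hs]
    linear_combination (q 0 - c 0) * h1 / 4
  · simp [planeRot, hc, hs]
    linear_combination (q 1 - c 1) * h1 / 4

theorem hx_sep (c p : EuclideanSpace ℝ (Fin 2)) (hp : dist c p = 2) (s t : ℝ)
    (h : 2 ≤ dist (c + planeRot (s * Real.pi / 3) (p - c))
      (c + planeRot (t * Real.pi / 3) (p - c))) :
    Real.cos ((t - s) * Real.pi / 3) ≤ 1 / 2 := by
  have h1 := hx_dist_sq c p
  rw [hp] at h1
  have h2 := hx_dist_sq (c + planeRot (s * Real.pi / 3) (p - c))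
      (c + planeRot (t * Real.pi / 3) (p - c))
  have h3 : (4 : ℝ) ≤ dist (c + planeRot (s * Real.pi / 3) (p - c))
      (c + planeRot (t * Real.pi / 3) (p - c)) ^ 2 := by nlinarith
  rw [h2] at h3
  simp [planeRot] at h3
  rw [show (t - s) * Real.pi / 3 = t * Real.pi / 3 - s * Real.pi / 3 by ring, Real.cos_sub]
  have e1 := Real.sin_sq_add_cos_sq (s * Real.pi / 3)
  have e2 := Real.sin_sq_add_cos_sq (t * Real.pi / 3)
  generalize Real.cos (s * Real.pi / 3) = C at *
  generalize Real.sin (s * Real.pi / 3) = D at *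
  generalize Real.cos (t * Real.pi / 3) = E at *
  generalize Real.sin (t * Real.pi / 3) = F at *
  have h4 : (4 : ℝ) ≤ ((C - E) ^ 2 + (D - F) ^ 2) * ((c 0 - p 0) ^ 2 + (c 1 - p 1) ^ 2) := by
    refine h3.trans (le_of_eq ?_)
    ring
  rw [← h1] at h4
  nlinarith

theorem hx_sep' (s t : ℝ) (h : Real.cos ((t - s) * Real.pi / 3) ≤ 1 / 2)
    (s0 : 0 ≤ s) (s6 : s < 6) (t0 : 0 ≤ t) (t6 : t < 6) (hst : s ≤ t) :
    s + 1 ≤ t ∧ t ≤ s + 5 := by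
  have := hx_cos (t - s) (by linarith) (by linarith) h
  constructor <;> linarith

/-- Rigidity of six disks around one: if `S` is a set of exactly 6 points of the
Euclidean plane, each at distance exactly 2 from `c`, with any two distinct points
of `S` at distance at least 2, then for every `p ∈ S` the set `S` consists exactly
of the points `c + R_{kπ/3}(p - c)` for `k = 0, …, 5`; i.e., `S` is the vertex set
of a regular hexagon of circumradius 2 centered at `c`. -/
theorem six_kissing_disks_regular_hexagon (c : EuclideanSpace ℝ (Fin 2))
    (S : Set (EuclideanSpace ℝ (Fin 2))) (hcard : S.ncard = 6)
    (htouch : ∀ p ∈ S, dist c p = 2)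
    (hsep : ∀ p ∈ S, ∀ q ∈ S, p ≠ q → 2 ≤ dist p q) :
    ∀ p ∈ S, S = {q | ∃ k : Fin 6, q = c + planeRot (k * Real.pi / 3) (p - c)} := by
  intro p hpS
  have hex : ∀ q : EuclideanSpace ℝ (Fin 2), ∃ t : ℝ, q ∈ S →
      0 ≤ t ∧ t < 6 ∧ q = c + planeRot (t * Real.pi / 3) (p - c) := by
    intro q
    by_cases hq : q ∈ S
    · obtain ⟨t, ht⟩ := hx_exists c p q (htouch p hpS) (htouch q hq)
      exact ⟨t, fun _ => ht⟩
    · exact ⟨0, fun h => absurd h hq⟩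
  choose u hu using hex
  have hp0 : p = c + planeRot (0 * Real.pi / 3) (p - c) := by
    ext i
    fin_cases i <;> simp [planeRot]
  have hsepu : ∀ q ∈ S, ∀ r ∈ S, q ≠ r → u q ≤ u r → u q + 1 ≤ u r := by
    intro q hq r hr hqr hle
    obtain ⟨a0, a6, a⟩ := hu q hq
    obtain ⟨b0, b6, b⟩ := hu r hr
    have h := hsep q hq r hr hqr
    rw [a, b] at h
    exact (hx_sep' _ _ (hx_sep c p (htouch p hpS) _ _ h) a0 a6 b0 b6 hle).1
  have hbase : ∀ q ∈ S, q ≠ p → 1 ≤ u q ∧ u q ≤ 5 := by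
    intro q hq hqp
    obtain ⟨a0, a6, a⟩ := hu q hq
    have h := hsep p hpS q hq hqp.symm
    rw [a] at h
    nth_rewrite 1 [hp0] at h
    have := hx_sep' _ _ (hx_sep c p (htouch p hpS) _ _ h) le_rfl (by norm_num) a0 a6 a0
    constructor <;> linarith
  have hfin : S.Finite := Set.finite_of_ncard_ne_zero (by omega)
  have hinj : Set.InjOn (fun q => ⌊u q⌋₊) S := by
    intro q hq r hr h
    by_contra hne
    have h1 := Nat.floor_le (hu q hq).1
    have h2 := Nat.floor_le (hu r hr).1
    have h3 := Nat.lt_floor_add_one (u q)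
    have h4 := Nat.lt_floor_add_one (u r)
    simp only at h
    rw [h] at h1 h3
    rcases le_total (u q) (u r) with hle | hle
    · linarith [hsepu q hq r hr hne hle]
    · linarith [hsepu r hr q hq (Ne.symm hne) hle]
  have himg : (fun q => ⌊u q⌋₊) '' S = (Finset.range 6 : Set ℕ) := by
    apply Set.eq_of_subset_of_ncard_le
    · rintro _ ⟨q, hq, rfl⟩
      simp only [Finset.coe_range, Set.mem_Iio]
      rw [Nat.floor_lt (hu q hq).1]
      exact_mod_cast (hu q hq).2.1
    · rw [Set.ncard_image_of_injOn hinj, hcard, Set.ncard_coe_finset]; simp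
    · exact Finset.finite_toSet _
  have hsurj : ∀ k : ℕ, k < 6 → ∃ q ∈ S, ⌊u q⌋₊ = k := by
    intro k hk
    have : k ∈ (fun q => ⌊u q⌋₊) '' S := by rw [himg]; simpa using hk
    exact this
  have hb : ∀ q ∈ S, ∀ k : ℕ, ⌊u q⌋₊ = k → (k : ℝ) ≤ u q ∧ u q < k + 1 := by
    intro q hq k hk
    exact (Nat.floor_eq_iff (hu q hq).1).1 hk
  obtain ⟨q0, m0, f0⟩ := hsurj 0 (by norm_num)
  obtain ⟨q1, m1, f1⟩ := hsurj 1 (by norm_num)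
  obtain ⟨q2, m2, f2⟩ := hsurj 2 (by norm_num)
  obtain ⟨q3, m3, f3⟩ := hsurj 3 (by norm_num)
  obtain ⟨q4, m4, f4⟩ := hsurj 4 (by norm_num)
  obtain ⟨q5, m5, f5⟩ := hsurj 5 (by norm_num)
  have b0 := hb q0 m0 0 f0
  have b1 := hb q1 m1 1 f1
  have b2 := hb q2 m2 2 f2
  have b3 := hb q3 m3 3 f3
  have b4 := hb q4 m4 4 f4
  have b5 := hb q5 m5 5 f5
  push_cast at b0 b1 b2 b3 b4 b5
  have e0 : q0 = p := by
    by_contra hne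
    linarith [(hbase q0 m0 hne).1]
  have n5 : q5 ≠ p := by
    rintro rfl
    rw [e0] at f0
    omega
  have l5 := (hbase q5 m5 n5).2
  have s4 := hsepu q4 m4 q5 m5 (by rintro rfl; omega) (by linarith)
  have s3 := hsepu q3 m3 q4 m4 (by rintro rfl; omega) (by linarith)
  have s2 := hsepu q2 m2 q3 m3 (by rintro rfl; omega) (by linarith)
  have s1 := hsepu q1 m1 q2 m2 (by rintro rfl; omega) (by linarith)
  have key : ∀ k : Fin 6, ∃ q ∈ S, ⌊u q⌋₊ = (k : ℕ) ∧
      q = c + planeRot (k * Real.pi / 3) (p - c) := by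
    have aux : ∀ q ∈ S, ∀ x : ℝ, u q = x → q = c + planeRot (x * Real.pi / 3) (p - c) := by
      rintro q hq x rfl
      exact (hu q hq).2.2
    intro k
    fin_cases k
    · exact ⟨q0, m0, f0, by rw [e0]; simpa using hp0⟩
    · exact ⟨q1, m1, f1, by simpa using aux q1 m1 1 (by linarith)⟩
    · exact ⟨q2, m2, f2, by simpa using aux q2 m2 2 (by linarith)⟩
    · exact ⟨q3, m3, f3, by simpa using aux q3 m3 3 (by linarith)⟩
    · exact ⟨q4, m4, f4, by simpa using aux q4 m4 4 (by linarith)⟩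
    · exact ⟨q5, m5, f5, by simpa using aux q5 m5 5 (by linarith)⟩
  ext q
  simp only [Set.mem_setOf_eq]
  constructor
  · intro hq
    have hlt : ⌊u q⌋₊ < 6 := by
      rw [Nat.floor_lt (hu q hq).1]
      exact_mod_cast (hu q hq).2.1
    obtain ⟨r, hr, hf, he⟩ := key ⟨⌊u q⌋₊, hlt⟩
    have : q = r := hinj hq hr hf.symm
    exact ⟨_, this.trans he⟩
  · rintro ⟨k, rfl⟩
    obtain ⟨r, hr, -, he⟩ := key k
    rw [← he]
    exact hr
end

section
/- Let c be a point of the Euclidean plane ℝ² and let S be a set of exactly 6 points, each at distance exactly 2 from c, with any two distinct points of S at distance at least 2 from each other. Then for every p ∈ S there exist exactly two points q ∈ S with q ≠ p and dist p q = 2. In particular, among six pairwise internally disjoint unit disks all touching a common unit disk, every one of the six touches two of the others; hence in a (strong) unit disk contact representation of a tree, where disks of non-adjacent nodes may not touch, every node has degree at most 5. -/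
theorem sector_aux {α : Type*} (S : Finset α) (hS : S.card = 6) (x y : α → ℝ) (p : α) (hp : p ∈ S)
    (hx : x p = 1) (hy : y p = 0) (hn : ∀ q ∈ S, x q ^ 2 + y q ^ 2 = 1)
    (hs : ∀ q ∈ S, ∀ r ∈ S, q ≠ r → x q * x r + y q * y r ≤ 1 / 2) :
    ∃ q ∈ S, x q = 1 / 2 ∧ 0 < y q := by
  have hpi := Real.pi_pos
  let t : α → ℝ := fun q => Complex.arg ⟨x q, y q⟩
  have hnorm : ∀ q ∈ S, ‖(⟨x q, y q⟩ : ℂ)‖ = 1 := by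
    intro q hq
    have h := Complex.sq_norm (⟨x q, y q⟩ : ℂ)
    rw [Complex.normSq_mk] at h
    have h2 := hn q hq
    have h3 := norm_nonneg (⟨x q, y q⟩ : ℂ)
    nlinarith
  have hc : ∀ q ∈ S, Real.cos (t q) = x q := by
    intro q hq
    have h := Complex.norm_mul_cos_arg (⟨x q, y q⟩ : ℂ)
    rw [hnorm q hq] at h
    simpa using h
  have hsn : ∀ q ∈ S, Real.sin (t q) = y q := by
    intro q hq
    have h := Complex.norm_mul_sin_arg (⟨x q, y q⟩ : ℂ)
    rw [hnorm q hq] at h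
    simpa using h
  have hcos : ∀ d : ℝ, |d| < Real.pi / 3 → 1 / 2 < Real.cos d := by
    intro d hd
    rw [← Real.cos_abs, ← Real.cos_pi_div_three]
    exact Real.cos_lt_cos_of_nonneg_of_le_pi (abs_nonneg d) (by linarith) hd
  have hsep : ∀ q ∈ S, ∀ r ∈ S, q ≠ r → Real.pi / 3 ≤ |t q - t r| := by
    intro q hq r hr hqr
    by_contra! hlt
    have h1 := hcos _ hlt
    rw [Real.cos_sub, hc q hq, hc r hr, hsn q hq, hsn r hr] at h1
    linarith [hs q hq r hr hqr]
  let k : α → ℤ := fun q => ⌈t q / (Real.pi / 3)⌉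
  have hmaps : ∀ q ∈ S, k q ∈ Finset.Icc (-2 : ℤ) 3 := by
    intro q hq
    have h1 : -Real.pi < t q := Complex.neg_pi_lt_arg _
    have h2 : t q ≤ Real.pi := Complex.arg_le_pi _
    rw [Finset.mem_Icc]
    constructor
    · have : (-3 : ℤ) < k q := by
        rw [Int.lt_ceil, lt_div_iff₀ (by positivity)]
        push_cast
        linarith
      omega
    · rw [Int.ceil_le, div_le_iff₀ (by positivity)]
      push_cast
      linarith
  have hinj : Set.InjOn k S := by
    intro q hq r hr hqr
    by_contra hne
    have h := hsep q hq r hr hne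
    have a1 := Int.ceil_lt_add_one (t q / (Real.pi / 3))
    have a2 := Int.le_ceil (t q / (Real.pi / 3))
    have b1 := Int.ceil_lt_add_one (t r / (Real.pi / 3))
    have b2 := Int.le_ceil (t r / (Real.pi / 3))
    have hqr' : ⌈t q / (Real.pi / 3)⌉ = ⌈t r / (Real.pi / 3)⌉ := hqr
    rw [hqr'] at a1 a2
    have hlt : |t q / (Real.pi / 3) - t r / (Real.pi / 3)| < 1 := by
      rw [abs_lt]; constructor <;> linarith
    rw [← sub_div, abs_div, abs_of_pos (show 0 < Real.pi / 3 by positivity),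
      div_lt_one (by positivity)] at hlt
    linarith
  have hsurj := Finset.surjOn_of_injOn_of_card_le k hmaps hinj (by rw [hS]; simp)
  obtain ⟨q, hq, hk⟩ := hsurj (show (1 : ℤ) ∈ ((Finset.Icc (-2 : ℤ) 3 : Finset ℤ) : Set ℤ) by simp)
  have hq : q ∈ S := hq
  have hk' : ⌈t q / (Real.pi / 3)⌉ = 1 := hk
  rw [Int.ceil_eq_iff] at hk'
  obtain ⟨h1, h2⟩ := hk'
  rw [div_le_iff₀ (by positivity)] at h2
  rw [lt_div_iff₀ (by positivity)] at h1
  push_cast at h1 h2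
  have ht0 : 0 < t q := by linarith
  have htp : t p = 0 := by
    have : (⟨x p, y p⟩ : ℂ) = 1 := by rw [hx, hy]; rfl
    simp only [t, this, Complex.arg_one]
  have hne : q ≠ p := by
    rintro rfl
    linarith
  have h3 := hsep q hq p hp hne
  rw [htp, sub_zero, abs_of_pos ht0] at h3
  have ht : t q = Real.pi / 3 := by linarith
  refine ⟨q, hq, ?_, ?_⟩
  · rw [← hc q hq, ht, Real.cos_pi_div_three]
  · rw [← hsn q hq]
    exact Real.sin_pos_of_pos_of_lt_pi ht0 (by linarith)

/-- If `S` is a set of exactly 6 points of the Euclidean plane, each at distance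
exactly 2 from `c`, with any two distinct points of `S` at distance at least 2,
then every point `p ∈ S` has exactly two points `q ∈ S` with `q ≠ p` and
`dist p q = 2` (each of the six outer disks touches exactly two of the others). -/
theorem six_kissing_disks_each_touches_two (c : EuclideanSpace ℝ (Fin 2))
    (S : Set (EuclideanSpace ℝ (Fin 2))) (hcard : S.ncard = 6)
    (htouch : ∀ p ∈ S, dist c p = 2)
    (hsep : ∀ p ∈ S, ∀ q ∈ S, p ≠ q → 2 ≤ dist p q) :
    ∀ p ∈ S, {q ∈ S | q ≠ p ∧ dist p q = 2}.ncard = 2 := by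
  intro p hp
  have hfin : S.Finite := Set.finite_of_ncard_ne_zero (by omega)
  have hd : ∀ a b : EuclideanSpace ℝ (Fin 2),
      dist a b ^ 2 = (a 0 - b 0) ^ 2 + (a 1 - b 1) ^ 2 := by
    intro a b
    rw [EuclideanSpace.dist_eq, Real.sq_sqrt (by positivity)]
    simp [Fin.sum_univ_two, Real.dist_eq, sq_abs]
  have hr : ∀ q ∈ S, (q 0 - c 0) ^ 2 + (q 1 - c 1) ^ 2 = 4 := by
    intro q hq
    have h := hd c q
    rw [htouch q hq] at h
    linarith
  have hsq : ∀ q ∈ S, ∀ r ∈ S, q ≠ r → 4 ≤ (q 0 - r 0) ^ 2 + (q 1 - r 1) ^ 2 := by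
    intro q hq r hr' hne
    rw [← hd]
    nlinarith [hsep q hq r hr' hne]
  have hp4 := hr p hp
  let x : EuclideanSpace ℝ (Fin 2) → ℝ := fun q =>
    ((p 0 - c 0) * (q 0 - c 0) + (p 1 - c 1) * (q 1 - c 1)) / 4
  let y : EuclideanSpace ℝ (Fin 2) → ℝ := fun q =>
    ((p 0 - c 0) * (q 1 - c 1) - (p 1 - c 1) * (q 0 - c 0)) / 4
  have hx : x p = 1 := by simp only [x]; linarith
  have hy : y p = 0 := by simp only [y]; ring
  have hinner : ∀ q r, x q * x r + y q * y r =
      ((q 0 - c 0) * (r 0 - c 0) + (q 1 - c 1) * (r 1 - c 1)) / 4 := by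
    intro q r
    have : x q * x r + y q * y r = ((p 0 - c 0) ^ 2 + (p 1 - c 1) ^ 2) *
      ((q 0 - c 0) * (r 0 - c 0) + (q 1 - c 1) * (r 1 - c 1)) / 16 := by
      simp only [x, y]; ring
    rw [this, hp4]; ring
  have hn : ∀ q ∈ S, x q ^ 2 + y q ^ 2 = 1 := by
    intro q hq
    have h := hinner q q
    have h2 := hr q hq
    nlinarith
  have hs : ∀ q ∈ S, ∀ r ∈ S, q ≠ r → x q * x r + y q * y r ≤ 1 / 2 := by
    intro q hq r hr' hne
    rw [hinner]
    nlinarith [hr q hq, hr r hr', hsq q hq r hr' hne]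
  have hcard' : hfin.toFinset.card = 6 := by rw [← Set.ncard_eq_toFinset_card S hfin, hcard]
  have hm : ∀ q, q ∈ hfin.toFinset ↔ q ∈ S := fun q => hfin.mem_toFinset
  obtain ⟨a, ha, hax, hay⟩ := sector_aux hfin.toFinset hcard' x y p ((hm p).2 hp) hx hy
    (fun q hq => hn q ((hm q).1 hq))
    (fun q hq r hr' => hs q ((hm q).1 hq) r ((hm r).1 hr'))
  obtain ⟨b, hb, hbx, hby⟩ := sector_aux hfin.toFinset hcard' x (fun q => - y q) p ((hm p).2 hp) hx
    (by simp [hy])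
    (fun q hq => by simpa using hn q ((hm q).1 hq))
    (fun q hq r hr' hne => by simpa using hs q ((hm q).1 hq) r ((hm r).1 hr') hne)
  rw [hm] at ha hb
  have hab : a ≠ b := by
    rintro rfl
    linarith
  have hiff : ∀ q ∈ S, (dist p q = 2 ↔ x q = 1 / 2) := by
    intro q hq
    have h1 := hd p q
    have h2 := hr q hq
    have h3 : dist p q ^ 2 = 8 - 8 * x q := by
      rw [h1]; simp only [x]; linarith
    constructor
    · intro h
      rw [h] at h3
      linarith
    · intro h
      rw [h] at h3
      have := dist_nonneg (x := p) (y := q)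
      nlinarith
  rw [Set.ncard_eq_two]
  refine ⟨a, b, hab, ?_⟩
  ext q
  simp only [Set.mem_setOf_eq, Set.mem_insert_iff, Set.mem_singleton_iff]
  constructor
  · rintro ⟨hq, -, hq2⟩
    rw [hiff q hq] at hq2
    have e1 := hn q hq
    have e2 := hn a ha
    have e3 := hn b hb
    rw [hq2] at e1
    rw [hax] at e2
    rw [hbx] at e3
    by_contra! hne
    have f1 := hs q hq a ha hne.1
    have f2 := hs q hq b hb hne.2
    rw [hq2, hax] at f1
    rw [hq2, hbx] at f2
    have g1 : y q ^ 2 = y a ^ 2 := by linarith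
    have g2 : y q ^ 2 = y b ^ 2 := by linarith
    rcases sq_eq_sq_iff_eq_or_eq_neg.1 g1 with g | g
    · rw [g] at f1
      nlinarith
    · rcases sq_eq_sq_iff_eq_or_eq_neg.1 g2 with g' | g'
      · rw [g'] at f2
        nlinarith
      · linarith
  · rintro (rfl | rfl)
    · exact ⟨ha, by rintro rfl; linarith, (hiff _ ha).2 hax⟩
    · exact ⟨hb, by rintro rfl; linarith, (hiff _ hb).2 hbx⟩
end

section
/- Let u = (2, 0) and v = (1, √3) in the Euclidean plane ℝ², and consider the hexagonal lattice Λ = { m • u + n • v : m, n ∈ ℤ }. Then any two distinct points of Λ are at distance at least 2; consequently, the unit disks centered at the points of Λ have pairwise disjoint interiors. -/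
/-- A point of the Euclidean plane given by its two coordinates. -/
noncomputable def pt (x y : ℝ) : EuclideanSpace ℝ (Fin 2) :=
  (WithLp.equiv 2 (Fin 2 → ℝ)).symm ![x, y]

/-- In the hexagonal lattice generated by `u = (2,0)` and `v = (1, √3)`, any two
distinct lattice points are at distance at least 2; consequently the open unit balls
centered at the lattice points are pairwise disjoint. -/
theorem hexagonal_lattice_separated :
    let u := pt 2 0
    let v := pt 1 (Real.sqrt 3)
    let Λ : Set (EuclideanSpace ℝ (Fin 2)) := {p | ∃ m n : ℤ, p = m • u + n • v}
    (∀ p ∈ Λ, ∀ q ∈ Λ, p ≠ q → 2 ≤ dist p q) ∧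
      ∀ p ∈ Λ, ∀ q ∈ Λ, p ≠ q → Disjoint (Metric.ball p 1) (Metric.ball q 1) := by
  intro u v Λ
  have key : ∀ p ∈ Λ, ∀ q ∈ Λ, p ≠ q → 2 ≤ dist p q := by
    rintro p ⟨m, n, rfl⟩ q ⟨m', n', rfl⟩ hne
    have hZ : 1 ≤ (m - m') ^ 2 + (m - m') * (n - n') + (n - n') ^ 2 := by
      by_contra hlt
      have h1 : (m - m') ^ 2 + (m - m') * (n - n') + (n - n') ^ 2 ≤ 0 := by omega
      have ha : (m - m') ^ 2 = 0 := by
        nlinarith [sq_nonneg (m - m'), sq_nonneg ((m - m') + 2 * (n - n'))]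
      have hb : (n - n') ^ 2 = 0 := by
        nlinarith [sq_nonneg (n - n'), sq_nonneg (2 * (m - m') + (n - n'))]
      have ha' : m - m' = 0 := by simpa using ha
      have hb' : n - n' = 0 := by simpa using hb
      apply hne
      rw [show m = m' by omega, show n = n' by omega]
    have hR : (1 : ℝ) ≤ ((m : ℝ) - m') ^ 2 + ((m : ℝ) - m') * ((n : ℝ) - n')
        + ((n : ℝ) - n') ^ 2 := by exact_mod_cast hZ
    have h3 : Real.sqrt 3 ^ 2 = 3 := Real.sq_sqrt (by norm_num)
    rw [EuclideanSpace.dist_eq]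
    apply Real.le_sqrt_of_sq_le
    simp only [Fin.sum_univ_two, Real.dist_eq, sq_abs]
    simp [u, v, pt]
    have e : ((m : ℝ) * 2 + n - (m' * 2 + n')) ^ 2
        + ((n : ℝ) * Real.sqrt 3 - n' * Real.sqrt 3) ^ 2
        = 4 * (((m : ℝ) - m') ^ 2 + ((m : ℝ) - m') * ((n : ℝ) - n')
        + ((n : ℝ) - n') ^ 2) := by
      linear_combination ((n : ℝ) - n') ^ 2 * h3
    rw [e]
    linarith
  refine ⟨key, fun p hp q hq hne => Metric.ball_disjoint_ball ?_⟩
  have := key p hp q hq hne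
  linarith
end

section
/- Let V be a type and c : V → ℝ² an injective map such that any two distinct u, v ∈ V satisfy dist (c u) (c v) ≥ 2 (i.e., the unit disks centered at the points c v are pairwise internally disjoint). Then for every v ∈ V, the set { u ∈ V : u ≠ v ∧ dist (c u) (c v) = 2 } is finite and has at most 6 elements. In particular, every graph admitting a weak unit disk contact representation has maximum degree at most 6. -/
open Real in
lemma aux_sector {a b : ℝ} (h : ⌈a * 3 / π⌉ = ⌈b * 3 / π⌉) :
    1 / 2 < Real.cos (a - b) := by
  have hp := Real.pi_pos
  have h1 := Int.le_ceil (a * 3 / π)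
  have h2 := Int.ceil_lt_add_one (a * 3 / π)
  have h3 := Int.le_ceil (b * 3 / π)
  have h4 := Int.ceil_lt_add_one (b * 3 / π)
  rw [h] at h1 h2
  have h5 : a * 3 / π - b * 3 / π < 1 := by linarith
  have h6 : b * 3 / π - a * 3 / π < 1 := by linarith
  rw [← sub_div, div_lt_one hp] at h5 h6
  have h7 : |a - b| < π / 3 := by
    rw [abs_lt]; constructor <;> linarith
  rw [← Real.cos_abs, ← Real.cos_pi_div_three]
  exact Real.cos_lt_cos_of_nonneg_of_le_pi (abs_nonneg _) (by linarith) h7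

open Real in
lemma aux_norm {z w : ℂ} (hz : ‖z‖ = 2) (hw : ‖w‖ = 2)
    (h : ⌈z.arg * 3 / π⌉ = ⌈w.arg * 3 / π⌉) :
    (z.re - w.re) ^ 2 + (z.im - w.im) ^ 2 < 4 := by
  have hc := aux_sector h
  have h1 := Complex.norm_mul_cos_arg z
  have h2 := Complex.norm_mul_sin_arg z
  have h3 := Complex.norm_mul_cos_arg w
  have h4 := Complex.norm_mul_sin_arg w
  rw [hz] at h1 h2
  rw [hw] at h3 h4
  rw [← h1, ← h2, ← h3, ← h4]
  rw [Real.cos_sub] at hc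
  nlinarith [Real.sin_sq_add_cos_sq z.arg, Real.sin_sq_add_cos_sq w.arg]

lemma aux_dist (x y : EuclideanSpace ℝ (Fin 2)) :
    dist x y ^ 2 = (x 0 - y 0) ^ 2 + (x 1 - y 1) ^ 2 := by
  rw [EuclideanSpace.dist_eq, Real.sq_sqrt (by positivity)]
  simp [Fin.sum_univ_two, Real.dist_eq, sq_abs]

/-- If `c : V → ℝ²` is injective and any two distinct points of its image are at
distance at least 2 (pairwise internally disjoint unit disks), then every `v ∈ V`
has at most 6 elements `u` with `dist (c u) (c v) = 2`: a graph admitting a weak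
unit disk contact representation has maximum degree at most 6. -/
theorem weak_udcr_max_degree_six {V : Type*} (c : V → EuclideanSpace ℝ (Fin 2))
    (hinj : Function.Injective c)
    (hsep : ∀ u v : V, u ≠ v → 2 ≤ dist (c u) (c v)) :
    ∀ v : V, {u : V | u ≠ v ∧ dist (c u) (c v) = 2}.Finite ∧
      {u : V | u ≠ v ∧ dist (c u) (c v) = 2}.ncard ≤ 6 := by
  intro v
  let z : V → ℂ := fun u => ⟨c u 0 - c v 0, c u 1 - c v 1⟩
  let f : V → ℤ := fun u => ⌈(z u).arg * 3 / Real.pi⌉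
  have hp := Real.pi_pos
  have hz : ∀ u, dist (c u) (c v) = 2 → ‖z u‖ = 2 := by
    intro u hu
    have h := aux_dist (c u) (c v)
    rw [hu] at h
    have h2 : ‖z u‖ ^ 2 = 2 ^ 2 := by
      rw [← Complex.normSq_eq_norm_sq, Complex.normSq_apply, h]
      ring
    exact (pow_left_inj₀ (norm_nonneg _) (by norm_num) (by norm_num)).1 h2
  have hmaps : Set.MapsTo f {u : V | u ≠ v ∧ dist (c u) (c v) = 2}
      (↑(Finset.Icc (-2 : ℤ) 3) : Set ℤ) := by
    intro u _
    have h1 := Complex.neg_pi_lt_arg (z u)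
    have h2 := Complex.arg_le_pi (z u)
    have h3 : (-3 : ℤ) < f u := by
      rw [Int.lt_ceil, lt_div_iff₀ hp]; push_cast; linarith
    have h4 : f u ≤ 3 := by
      rw [Int.ceil_le, div_le_iff₀ hp]; push_cast; linarith
    rw [Finset.mem_coe, Finset.mem_Icc]
    omega
  have hinjOn : Set.InjOn f {u : V | u ≠ v ∧ dist (c u) (c v) = 2} := by
    intro u hu w hw h
    by_contra hne
    have h1 := aux_norm (hz u hu.2) (hz w hw.2) h
    have h2 := aux_dist (c u) (c w)
    have h3 := hsep u w hne
    simp only [z, sub_sub_sub_cancel_right] at h1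
    nlinarith
  refine ⟨Set.Finite.of_injOn hmaps hinjOn (Finset.finite_toSet _), ?_⟩
  have := Set.ncard_le_ncard_of_injOn f hmaps hinjOn (Finset.finite_toSet _)
  rw [Set.ncard_coe_finset] at this
  simpa using this
end
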